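/- Let H be a finite-dimensional complex inner product space, N ∈ ℕ, let X_1,…,X_N be pairwise commuting binary observables on H, let Z_1,…,Z_N be pairwise commuting binary observables on H, fix ψ ∈ H, and let Φ be the extracted global vector. Then for every linear operator M on Q_N: ⟨Φ, (Id_H ⊗ Id_{Q_N} ⊗ M) Φ⟩ = 4^{−N} · Σ_{r',s',r'',s'' ∈ {0,1}^N} (−1)^{(r'⊕r'')·s''} · ⟨ψ, Z(s') X(r'⊕r'') Z(s'') ψ⟩ · ⟨φ+_N, ((σz(s'⊕s'') σx(r'⊕r'')) ⊗ M) φ+_N⟩. -/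

import Mathlib

open scoped Matrix Kronecker ComplexConjugate

noncomputable section

/-- Bit vectors of length `N`, i.e. elements of `{0,1}^N`. -/
abbrev BV (N : ℕ) := Fin N → Bool

/-- The space `Q_N` of functions `{0,1}^N → ℂ`. -/
abbrev QV (N : ℕ) := BV N → ℂ

/-- Linear operators on `Q_N`, represented as matrices in the standard basis. -/
abbrev QOp (N : ℕ) := Matrix (BV N) (BV N) ℂ

/-- Bitwise XOR of bit vectors. -/
def bvXor {N : ℕ} (x r : BV N) : BV N := fun i => xor (x i) (r i)

/-- The sign `(-1)^{s·x}` where `s·x = Σ_i s_i x_i mod 2`. -/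
def bSign {N : ℕ} (s x : BV N) : ℂ :=
  (-1 : ℂ) ^ (Finset.univ.filter fun i => s i = true ∧ x i = true).card

/-- The standard basis vector `e_x` of `Q_N`. -/
def eVec {N : ℕ} (x : BV N) : QV N := fun y => if y = x then 1 else 0

/-- Tensor product of two vectors (as functions). -/
def tensVec {α β : Type*} (f : α → ℂ) (g : β → ℂ) : α × β → ℂ := fun p => f p.1 * g p.2

/-- The Pauli parity operator `σx(r)`, sending `e_x` to `e_{x ⊕ r}`. -/
def sigmaX {N : ℕ} (r : BV N) : QOp N :=
  Matrix.of fun y x => if y = bvXor x r then 1 else 0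

/-- The Pauli parity operator `σz(s)`, sending `e_x` to `(-1)^{s·x} e_x`. -/
def sigmaZ {N : ℕ} (s : BV N) : QOp N :=
  Matrix.diagonal fun x => bSign s x

/-- The scalar `2^{-N/2}`. -/
def invSqrt2pow (N : ℕ) : ℂ := (((Real.sqrt 2)⁻¹ : ℝ) : ℂ) ^ N

/-- The maximally entangled state `φ⁺_N = 2^{-N/2} Σ_x e_x ⊗ e_x`. -/
def phiPlus (N : ℕ) : BV N × BV N → ℂ :=
  invSqrt2pow N • ∑ x : BV N, tensVec (eVec x) (eVec x)

/-- The standard (complex) inner product on a finite function space. -/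
def qInner {α : Type*} [Fintype α] (f g : α → ℂ) : ℂ :=
  ∑ x, (starRingEnd ℂ) (f x) * g x

/-- The norm associated to `qInner`. -/
def qNorm {α : Type*} [Fintype α] (f : α → ℂ) : ℝ :=
  Real.sqrt (qInner f f).re

/-- A binary observable: a self-adjoint operator squaring to the identity. -/
def IsBinaryObs {ι : Type*} [Fintype ι] [DecidableEq ι] (O : Matrix ι ι ℂ) : Prop :=
  O.IsHermitian ∧ O * O = 1

/-- For pairwise commuting operators `X i`, the parity product `X(r) = ∏_{i : r_i = 1} X_i`. -/
def obsProd {n : ℕ} {ι : Type*} [Fintype ι] [DecidableEq ι]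
    (X : Fin n → Matrix ι ι ℂ) (hX : ∀ i j, Commute (X i) (X j)) (r : BV n) :
    Matrix ι ι ℂ :=
  (Finset.univ.filter fun i => r i = true).noncommProd X fun i _ j _ _ => hX i j

/-- The set of bit vectors supported on `R`. -/
def suppSet {N : ℕ} (R : Finset (Fin N)) : Finset (BV N) :=
  Finset.univ.filter fun u => ∀ i, u i = true → i ∈ R

/-- The projector `Π^{σx}_u = 2^{-|R|} Σ_{u' supported on R} (-1)^{u·u'} σx(u')`. -/
def projPauliX {N : ℕ} (R : Finset (Fin N)) (u : BV N) : QOp N :=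
  ((2 : ℂ) ^ R.card)⁻¹ • ∑ u' ∈ suppSet R, bSign u u' • sigmaX u'

/-- The projector `Π^{σz}_v = 2^{-|S|} Σ_{v' supported on S} (-1)^{v·v'} σz(v')`. -/
def projPauliZ {N : ℕ} (S : Finset (Fin N)) (v : BV N) : QOp N :=
  ((2 : ℂ) ^ S.card)⁻¹ • ∑ v' ∈ suppSet S, bSign v v' • sigmaZ v'

/-- The projector `Π^X_u = 2^{-|R|} Σ_{u' supported on R} (-1)^{u·u'} X(u')`
for a family of commuting binary observables. -/
def projObs {N : ℕ} {ι : Type*} [Fintype ι] [DecidableEq ι]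
    (X : Fin N → Matrix ι ι ℂ) (hX : ∀ i j, Commute (X i) (X j))
    (R : Finset (Fin N)) (u : BV N) : Matrix ι ι ℂ :=
  ((2 : ℂ) ^ R.card)⁻¹ • ∑ u' ∈ suppSet R, bSign u u' • obsProd X hX u'

/-- The extracted global vector
`Φ = 2^{-N} Σ_{r,s} (X(r)Z(s) ⊗ σx(r)σz(s) ⊗ Id)(ψ ⊗ φ⁺_N)`. -/
def extractedVec {N : ℕ} {ι : Type*} [Fintype ι] [DecidableEq ι]
    (X Z : Fin N → Matrix ι ι ℂ)
    (hX : ∀ i j, Commute (X i) (X j)) (hZ : ∀ i j, Commute (Z i) (Z j))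
    (ψ : ι → ℂ) : ι × BV N × BV N → ℂ :=
  ((2 : ℂ) ^ N)⁻¹ • ∑ r : BV N, ∑ s : BV N,
    ((obsProd X hX r * obsProd Z hZ s) ⊗ₖ ((sigmaX r * sigmaZ s) ⊗ₖ (1 : QOp N))).mulVec
      (tensVec ψ (phiPlus N))

/-!
Expanding `Φ` on both sides of `⟨Φ, (Id ⊗ Id ⊗ M) Φ⟩` gives a sum over pairs of branches, and on a
pair `(r', s')`, `(r'', s'')` the inner product factors over the tensor product. On `H`, the
operators `X(r')` and `X(r'')` merge into `X(r' ⊕ r'')` because the `X_i` are commuting self-adjoint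
involutions. On the first `Q_N` the Pauli operators merge in the same way, except that `σz(s'')`
must also be moved past `σx(r' ⊕ r'')`; this commutation is the only source of the sign.
-/

section NoncommProd

variable {α R : Type*}

theorem noncommProd_mul_self_eq_one [Monoid R] (s : Finset α) (f : α → R)
    (hcomm : (s : Set α).Pairwise (Function.onFun Commute f))
    (hf : ∀ i ∈ s, f i * f i = 1) :
    s.noncommProd f hcomm * s.noncommProd f hcomm = 1 := by
  rw [← Finset.noncommProd_mul_distrib f f hcomm hcomm hcomm,
    Finset.noncommProd_eq_pow_card s (f * f) _ 1 hf, one_pow]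

theorem noncommProd_mul_noncommProd_eq_symmDiff [DecidableEq α] [Monoid R] (s t : Finset α)
    (f : α → R) (hcomm : ∀ i j, Commute (f i) (f j)) (hf : ∀ i, f i * f i = 1) :
    s.noncommProd f (fun i _ j _ _ => hcomm i j) * t.noncommProd f (fun i _ j _ _ => hcomm i j)
      = (symmDiff s t).noncommProd f (fun i _ j _ _ => hcomm i j) := by
  let P (u : Finset α) : R := u.noncommProd f fun i _ j _ _ => hcomm i j
  have P_union {u v : Finset α} (huv : Disjoint u v) : P (u ∪ v) = P u * P v :=
    Finset.noncommProd_union_of_disjoint huv f _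
  have P_mul_self : P (s ∩ t) * P (s ∩ t) = 1 :=
    noncommProd_mul_self_eq_one _ f _ fun i _ => hf i
  have P_left : P s = P (s \ t) * P (s ∩ t) := by
    rw [← P_union (Finset.disjoint_sdiff_inter s t), Finset.sdiff_union_inter]
  have P_right : P t = P (s ∩ t) * P (t \ s) := by
    rw [Finset.inter_comm, ← P_union (Finset.disjoint_sdiff_inter t s).symm,
      Finset.union_comm, Finset.sdiff_union_inter]
  calc P s * P t = P (s \ t) * (P (s ∩ t) * P (s ∩ t)) * P (t \ s) := by
        rw [P_left, P_right]; simp only [mul_assoc]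
    _ = P (s \ t) * P (t \ s) := by
        rw [P_mul_self, mul_one]
    _ = P (symmDiff s t) := (P_union disjoint_sdiff_sdiff).symm

theorem isSelfAdjoint_noncommProd [Monoid R] [StarMul R] (s : Finset α) (f : α → R)
    (hcomm : (s : Set α).Pairwise (Function.onFun Commute f))
    (hf : ∀ i ∈ s, IsSelfAdjoint (f i)) : IsSelfAdjoint (s.noncommProd f hcomm) := by
  classical
  induction s using Finset.induction_on with
  | empty => simp
  | insert a s ha ih =>
    rw [Finset.noncommProd_insert_of_notMem _ _ _ _ ha]
    refine ((hf a (Finset.mem_insert_self a s)).commute_iff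
      (ih _ fun i hi => hf i (Finset.mem_insert_of_mem hi))).mp ?_
    exact Finset.noncommProd_commute _ _ _ _ fun i hi =>
      hcomm (Finset.mem_insert_self a s) (Finset.mem_insert_of_mem hi)
        (ne_of_mem_of_not_mem hi ha).symm

end NoncommProd

section ObsProd

variable {N : ℕ} {ι : Type*} [Fintype ι] [DecidableEq ι] {X Z : Fin N → Matrix ι ι ℂ}

theorem filter_bvXor (r r' : BV N) :
    (Finset.univ.filter fun i => bvXor r r' i = true)
      = symmDiff (Finset.univ.filter fun i => r i = true)
          (Finset.univ.filter fun i => r' i = true) := by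
  ext i
  cases hr : r i <;> cases hr' : r' i <;> simp [bvXor, Finset.mem_symmDiff, hr, hr']

theorem obsProd_mul_obsProd (hX : ∀ i j, Commute (X i) (X j)) (hsq : ∀ i, X i * X i = 1)
    (r r' : BV N) : obsProd X hX r * obsProd X hX r' = obsProd X hX (bvXor r r') := by
  simp only [obsProd, filter_bvXor]
  exact noncommProd_mul_noncommProd_eq_symmDiff _ _ X hX hsq

theorem isHermitian_obsProd (hX : ∀ i j, Commute (X i) (X j)) (hherm : ∀ i, (X i).IsHermitian)
    (r : BV N) : (obsProd X hX r).IsHermitian :=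
  isSelfAdjoint_noncommProd _ X _ fun i _ => hherm i

theorem conjTranspose_obsProd_mul_obsProd (hX : ∀ i j, Commute (X i) (X j))
    (hZ : ∀ i j, Commute (Z i) (Z j)) (hXobs : ∀ i, IsBinaryObs (X i))
    (hZherm : ∀ i, (Z i).IsHermitian) (r s r' s' : BV N) :
    (obsProd X hX r * obsProd Z hZ s)ᴴ * (obsProd X hX r' * obsProd Z hZ s')
      = obsProd Z hZ s * obsProd X hX (bvXor r r') * obsProd Z hZ s' := by
  rw [Matrix.conjTranspose_mul, isHermitian_obsProd hX fun i => (hXobs i).1,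
    isHermitian_obsProd hZ hZherm, ← obsProd_mul_obsProd hX fun i => (hXobs i).2]
  simp only [mul_assoc]

end ObsProd

section Pauli

variable {N : ℕ}

theorem bvXor_bvXor_cancel_right (x r : BV N) : bvXor (bvXor x r) r = x := by
  ext i
  simp [bvXor]

theorem eq_bvXor_comm {x y r : BV N} : y = bvXor x r ↔ x = bvXor y r := by
  constructor <;> rintro rfl <;> rw [bvXor_bvXor_cancel_right]

theorem bSign_comm (s x : BV N) : bSign s x = bSign x s := by
  simp only [bSign, and_comm]

theorem bSign_mul_self (s x : BV N) : bSign s x * bSign s x = 1 := by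
  rw [bSign, ← mul_pow, neg_one_mul, neg_neg, one_pow]

theorem bSign_eq_prod (s x : BV N) :
    bSign s x = ∏ i, if s i = true ∧ x i = true then (-1 : ℂ) else 1 := by
  rw [bSign, ← Finset.prod_filter, Finset.prod_const]

theorem bSign_bvXor_left (s t x : BV N) : bSign (bvXor s t) x = bSign s x * bSign t x := by
  simp only [bSign_eq_prod, ← Finset.prod_mul_distrib]
  refine Finset.prod_congr rfl fun i _ => ?_
  cases hs : s i <;> cases ht : t i <;> cases x i <;> simp [bvXor, hs, ht]

theorem bSign_bvXor_right (s x y : BV N) : bSign s (bvXor x y) = bSign s x * bSign s y := by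
  simp only [bSign_comm s, bSign_bvXor_left]

theorem isHermitian_sigmaZ (s : BV N) : (sigmaZ s).IsHermitian := by
  refine Matrix.isHermitian_diagonal_of_self_adjoint _ (funext fun x => ?_)
  simp [bSign]

theorem isHermitian_sigmaX (r : BV N) : (sigmaX r).IsHermitian := by
  ext x y
  simp [sigmaX, eq_bvXor_comm (x := x), apply_ite]

theorem sigmaZ_mul_sigmaZ (s t : BV N) : sigmaZ s * sigmaZ t = sigmaZ (bvXor s t) := by
  simp only [sigmaZ, Matrix.diagonal_mul_diagonal, bSign_bvXor_left]

theorem sigmaX_mul_sigmaX (r r' : BV N) : sigmaX r * sigmaX r' = sigmaX (bvXor r r') := by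
  ext y x
  have bvXor_rotate : bvXor (bvXor x r') r = bvXor x (bvXor r r') := by
    ext i
    simp only [bvXor, Bool.xor_assoc, Bool.xor_comm (r' i)]
  simp [sigmaX, Matrix.mul_apply, bvXor_rotate]

theorem sigmaX_mul_sigmaZ (r s : BV N) :
    sigmaX r * sigmaZ s = bSign r s • (sigmaZ s * sigmaX r) := by
  ext y x
  simp only [sigmaX, sigmaZ, Matrix.mul_diagonal, Matrix.smul_apply, Matrix.diagonal_mul,
    Matrix.of_apply, smul_eq_mul]
  split_ifs with h
  · rw [h, bSign_bvXor_right, bSign_comm r s]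
    linear_combination (-bSign s x) * bSign_mul_self s r
  · simp only [zero_mul, mul_zero]

theorem conjTranspose_sigmaX_mul_sigmaZ_mul (r s r' s' : BV N) :
    (sigmaX r * sigmaZ s)ᴴ * (sigmaX r' * sigmaZ s')
      = bSign (bvXor r r') s' • (sigmaZ (bvXor s s') * sigmaX (bvXor r r')) :=
  calc (sigmaX r * sigmaZ s)ᴴ * (sigmaX r' * sigmaZ s')
      = sigmaZ s * (sigmaX r * sigmaX r' * sigmaZ s') := by
        rw [Matrix.conjTranspose_mul, isHermitian_sigmaX, isHermitian_sigmaZ]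
        simp only [mul_assoc]
    _ = bSign (bvXor r r') s' • (sigmaZ s * sigmaZ s' * sigmaX (bvXor r r')) := by
        rw [sigmaX_mul_sigmaX, sigmaX_mul_sigmaZ, mul_smul_comm, mul_assoc]
    _ = bSign (bvXor r r') s' • (sigmaZ (bvXor s s') * sigmaX (bvXor r r')) := by
        rw [sigmaZ_mul_sigmaZ]

end Pauli

section InnerProduct

variable {α β : Type*} [Fintype α] [Fintype β]

theorem qInner_eq_star_dotProduct (f g : α → ℂ) : qInner f g = star f ⬝ᵥ g := rfl

theorem qInner_smul_left (c : ℂ) (f g : α → ℂ) : qInner (c • f) g = conj c * qInner f g := by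
  simp only [qInner_eq_star_dotProduct, star_smul, smul_dotProduct, smul_eq_mul, starRingEnd_apply]

theorem qInner_smul_right (c : ℂ) (f g : α → ℂ) : qInner f (c • g) = c * qInner f g := by
  simp only [qInner_eq_star_dotProduct, dotProduct_smul, smul_eq_mul]

theorem qInner_sum_left {κ : Type*} (s : Finset κ) (f : κ → α → ℂ) (g : α → ℂ) :
    qInner (∑ k ∈ s, f k) g = ∑ k ∈ s, qInner (f k) g := by
  simp only [qInner_eq_star_dotProduct, star_sum, sum_dotProduct]

theorem qInner_sum_right {κ : Type*} (s : Finset κ) (f : α → ℂ) (g : κ → α → ℂ) :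
    qInner f (∑ k ∈ s, g k) = ∑ k ∈ s, qInner f (g k) := by
  simp only [qInner_eq_star_dotProduct, dotProduct_sum]

theorem qInner_mulVec_mulVec {γ δ : Type*} [Fintype γ] [Fintype δ] (A : Matrix α γ ℂ)
    (B : Matrix α δ ℂ) (u : γ → ℂ) (v : δ → ℂ) :
    qInner (A *ᵥ u) (B *ᵥ v) = qInner u ((Aᴴ * B) *ᵥ v) := by
  rw [qInner_eq_star_dotProduct, qInner_eq_star_dotProduct, Matrix.star_mulVec,
    ← Matrix.dotProduct_mulVec, Matrix.mulVec_mulVec]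

theorem qInner_tensVec (u u' : α → ℂ) (v v' : β → ℂ) :
    qInner (tensVec u v) (tensVec u' v') = qInner u u' * qInner v v' := by
  simp only [qInner, tensVec, Fintype.sum_prod_type, Finset.sum_mul_sum, map_mul,
    mul_mul_mul_comm]

theorem kronecker_mulVec_tensVec {γ δ : Type*} (A : Matrix γ α ℂ) (B : Matrix δ β ℂ)
    (u : α → ℂ) (v : β → ℂ) :
    (A ⊗ₖ B) *ᵥ tensVec u v = tensVec (A *ᵥ u) (B *ᵥ v) := by
  ext ⟨i, j⟩
  simp only [Matrix.mulVec, dotProduct, tensVec, Matrix.kroneckerMap_apply,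
    Fintype.sum_prod_type, Finset.sum_mul_sum, mul_mul_mul_comm]

end InnerProduct

section ExtractedVec

variable {N : ℕ} {ι : Type*} [Fintype ι] [DecidableEq ι] (X Z : Fin N → Matrix ι ι ℂ)
  (hX : ∀ i j, Commute (X i) (X j)) (hZ : ∀ i j, Commute (Z i) (Z j)) (ψ : ι → ℂ)

/-- The unnormalised `(r, s)` branch `X(r)Z(s)ψ ⊗ (σx(r)σz(s) ⊗ Id)φ⁺_N` of the extracted vector,
kept as a product vector so that inner products of branches factor. -/
def extractedBranch (r s : BV N) : ι × BV N × BV N → ℂ :=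
  tensVec ((obsProd X hX r * obsProd Z hZ s) *ᵥ ψ)
    (((sigmaX r * sigmaZ s) ⊗ₖ (1 : QOp N)) *ᵥ phiPlus N)

theorem extractedVec_eq_sum_extractedBranch :
    extractedVec X Z hX hZ ψ
      = ((2 : ℂ) ^ N)⁻¹ • ∑ r : BV N, ∑ s : BV N, extractedBranch X Z hX hZ ψ r s := by
  simp only [extractedVec, extractedBranch, kronecker_mulVec_tensVec]

theorem qInner_extractedVec_mulVec (T : Matrix (ι × BV N × BV N) (ι × BV N × BV N) ℂ) :
    qInner (extractedVec X Z hX hZ ψ) (T *ᵥ extractedVec X Z hX hZ ψ)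
      = ((4 : ℂ) ^ N)⁻¹ * ∑ r' : BV N, ∑ s' : BV N, ∑ r'' : BV N, ∑ s'' : BV N,
          qInner (extractedBranch X Z hX hZ ψ r' s')
            (T *ᵥ extractedBranch X Z hX hZ ψ r'' s'') := by
  have normalization : conj ((2 : ℂ) ^ N)⁻¹ * ((2 : ℂ) ^ N)⁻¹ = ((4 : ℂ) ^ N)⁻¹ := by
    rw [map_inv₀, map_pow, Complex.conj_ofNat, ← mul_inv, ← mul_pow]
    norm_num
  rw [extractedVec_eq_sum_extractedBranch, Matrix.mulVec_smul, qInner_smul_left,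
    qInner_smul_right, ← mul_assoc, normalization]
  simp only [qInner_sum_left]
  simp only [Matrix.mulVec_sum, qInner_sum_right]

variable {X Z}

theorem qInner_extractedBranch (hXobs : ∀ i, IsBinaryObs (X i))
    (hZherm : ∀ i, (Z i).IsHermitian) (M : QOp N) (r' s' r'' s'' : BV N) :
    qInner (extractedBranch X Z hX hZ ψ r' s')
        (((1 : Matrix ι ι ℂ) ⊗ₖ ((1 : QOp N) ⊗ₖ M)) *ᵥ extractedBranch X Z hX hZ ψ r'' s'')
      = bSign (bvXor r' r'') s''
          * qInner ψ ((obsProd Z hZ s' * obsProd X hX (bvXor r' r'') * obsProd Z hZ s'') *ᵥ ψ)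
          * qInner (phiPlus N)
              (((sigmaZ (bvXor s' s'') * sigmaX (bvXor r' r'')) ⊗ₖ M) *ᵥ phiPlus N) := by
  have device_factor :
      qInner ((obsProd X hX r' * obsProd Z hZ s') *ᵥ ψ)
          ((obsProd X hX r'' * obsProd Z hZ s'') *ᵥ ψ)
        = qInner ψ
            ((obsProd Z hZ s' * obsProd X hX (bvXor r' r'') * obsProd Z hZ s'') *ᵥ ψ) := by
    rw [qInner_mulVec_mulVec, conjTranspose_obsProd_mul_obsProd hX hZ hXobs hZherm]
  have pauli_factor :
      qInner (((sigmaX r' * sigmaZ s') ⊗ₖ (1 : QOp N)) *ᵥ phiPlus N)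
          (((sigmaX r'' * sigmaZ s'') ⊗ₖ M) *ᵥ phiPlus N)
        = bSign (bvXor r' r'') s'' * qInner (phiPlus N)
            (((sigmaZ (bvXor s' s'') * sigmaX (bvXor r' r'')) ⊗ₖ M) *ᵥ phiPlus N) := by
    rw [qInner_mulVec_mulVec, Matrix.conjTranspose_kronecker, ← Matrix.mul_kronecker_mul,
      conjTranspose_sigmaX_mul_sigmaZ_mul, Matrix.conjTranspose_one, one_mul,
      Matrix.smul_kronecker, Matrix.smul_mulVec, qInner_smul_right]
  rw [extractedBranch, extractedBranch, kronecker_mulVec_tensVec, Matrix.one_mulVec,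
    Matrix.mulVec_mulVec, ← Matrix.mul_kronecker_mul, one_mul, mul_one, qInner_tensVec,
    device_factor, pauli_factor]
  ring

end ExtractedVec

theorem extractedVec_operator_expansion_general {N : ℕ} {ι : Type*} [Fintype ι] [DecidableEq ι]
    (X Z : Fin N → Matrix ι ι ℂ)
    (hXobs : ∀ i, IsBinaryObs (X i)) (hZherm : ∀ i, (Z i).IsHermitian)
    (hX : ∀ i j, Commute (X i) (X j)) (hZ : ∀ i j, Commute (Z i) (Z j))
    (ψ : ι → ℂ) (M : QOp N) :
    qInner (extractedVec X Z hX hZ ψ)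
        (((1 : Matrix ι ι ℂ) ⊗ₖ ((1 : QOp N) ⊗ₖ M)).mulVec (extractedVec X Z hX hZ ψ))
      = ((4 : ℂ) ^ N)⁻¹ * ∑ r' : BV N, ∑ s' : BV N, ∑ r'' : BV N, ∑ s'' : BV N,
          bSign (bvXor r' r'') s''
            * qInner ψ ((obsProd Z hZ s' * obsProd X hX (bvXor r' r'')
                * obsProd Z hZ s'').mulVec ψ)
            * qInner (phiPlus N)
                (((sigmaZ (bvXor s' s'') * sigmaX (bvXor r' r'')) ⊗ₖ M).mulVec (phiPlus N)) := by
  rw [qInner_extractedVec_mulVec]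
  simp only [qInner_extractedBranch hX hZ ψ hXobs hZherm]

/-- expansion of `⟨Φ, (Id ⊗ Id ⊗ M) Φ⟩` for the extracted vector `Φ`. -/
theorem extractedVec_operator_expansion {N : ℕ} {ι : Type*} [Fintype ι] [DecidableEq ι]
    (X Z : Fin N → Matrix ι ι ℂ)
    (hXobs : ∀ i, IsBinaryObs (X i)) (hZobs : ∀ i, IsBinaryObs (Z i))
    (hX : ∀ i j, Commute (X i) (X j)) (hZ : ∀ i j, Commute (Z i) (Z j))
    (ψ : ι → ℂ) (M : QOp N) :
    qInner (extractedVec X Z hX hZ ψ)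
        (((1 : Matrix ι ι ℂ) ⊗ₖ ((1 : QOp N) ⊗ₖ M)).mulVec (extractedVec X Z hX hZ ψ))
      = ((4 : ℂ) ^ N)⁻¹ * ∑ r' : BV N, ∑ s' : BV N, ∑ r'' : BV N, ∑ s'' : BV N,
          bSign (bvXor r' r'') s''
            * qInner ψ ((obsProd Z hZ s' * obsProd X hX (bvXor r' r'')
                * obsProd Z hZ s'').mulVec ψ)
            * qInner (phiPlus N)
                (((sigmaZ (bvXor s' s'') * sigmaX (bvXor r' r'')) ⊗ₖ M).mulVec (phiPlus N)) :=
  extractedVec_operator_expansion_general X Z hXobs (fun i => (hZobs i).1) hX hZ ψ M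

end
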